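/- Two directed acyclic graphs on the same vertex set have the same skeleton and the same v-structures if and only if they are Markov equivalent, in the sense that they induce the same d-separation relations (equivalently, encode the same conditional independence structure). -/

import Mathlib

/-- The skeleton of a directed graph: `a` and `b` are adjacent. -/
def Skel {V : Type*} (d : V → V → Prop) (a b : V) : Prop := d a b ∨ d b a

/-- `b` is a collider on a trail at the consecutive triple `(a, b, c)`. -/
def Collider {V : Type*} (d : V → V → Prop) (a b c : V) : Prop := d a b ∧ d c b

/-- A trail from `x` to `y`: a list of distinct vertices starting at `x`, ending
at `y`, with consecutive vertices adjacent in the skeleton. -/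
def IsTrail {V : Type*} (d : V → V → Prop) (l : List V) (x y : V) : Prop :=
  l.head? = some x ∧ l.getLast? = some y ∧ l.Nodup ∧ l.Chain' (Skel d)

/-- A trail is blocked by `Z` if some consecutive triple `(a,b,c)` on it is a
collider with neither `b` nor any descendant of `b` in `Z`, or a non-collider
with `b ∈ Z`. -/
def Blocked {V : Type*} (d : V → V → Prop) (Z : Set V) (l : List V) : Prop :=
  ∃ a b c : V, [a, b, c] <:+: l ∧
    ((Collider d a b c ∧ ∀ s ∈ Z, ¬ Relation.ReflTransGen d b s) ∨
     (¬ Collider d a b c ∧ b ∈ Z))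

/-- `x` and `y` are d-separated given `Z`: every trail from `x` to `y` is
blocked by `Z`. -/
def DSep {V : Type*} (d : V → V → Prop) (Z : Set V) (x y : V) : Prop :=
  ∀ l : List V, IsTrail d l x y → Blocked d Z l

/-- A v-structure `a → b ← c` with `a, c` nonadjacent. -/
def VStruct {V : Type*} (d : V → V → Prop) (a b c : V) : Prop :=
  d a b ∧ d c b ∧ a ≠ c ∧ ¬ Skel d a c

/-!
Every vertex of a trail from `x` to `y` that is active given `Z` is an ancestor of
`T = {x, y} ∪ Z`, and skipping its colliders in `Z` turns it into a path outside `Z` in the moral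
graph of the ancestors of `T`; conversely, such a path yields an active trail. So d-connection is
connectivity in a moral graph, which is built from adjacencies and v-structures only. What does
depend on the orientation is the vertex set `An(T)`.

To pass from `d₁` to `d₂`, let `A` consist of the vertices of an active trail of `d₁` and of
directed paths from them into `T`, so that every vertex of `A` outside `T` has a `d₁`-child in
`A`. If `A` is not contained in the `d₂`-ancestors of `T`, it has, being finite, a vertex `v`
outside them with no `d₂`-child in `A`, while `v` has a `d₁`-child `w` in `A`. In `d₂` all
neighbours of `v` in `A` point to `v`. Hence a `d₁`-parent `u` of `v` is adjacent to `w`, as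
otherwise `u → v ← w` would be a v-structure of `d₂` but not of `d₁`; so `w` is a child of `u` and
can replace `v` as a common child. Two moral neighbours of `v` in `A` are parents of `v` in `d₂`,
hence moral neighbours of each other, so `v` can be deleted without disconnecting `x` from `y`.

Conversely, nonadjacent vertices are d-separated by the parents of one of them, which recovers the
skeleton; and if `a - b - c` with `a`, `c` nonadjacent, then `b` is a collider exactly when it lies
outside the sets separating `a` from `c`.
-/

open Relation

section Ancestors

variable {V : Type*} {d : V → V → Prop}

/-- A directed graph is a DAG if it has no directed cycle. -/
def IsDAG (d : V → V → Prop) : Prop := ∀ x, ¬ TransGen d x x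

lemma IsDAG.not_reflTransGen (hd : IsDAG d) {a b : V} (hab : d a b) : ¬ ReflTransGen d b a :=
  fun p => hd a (.head' hab p)

lemma IsDAG.asymm (hd : IsDAG d) {a b : V} (hab : d a b) : ¬ d b a :=
  fun hba => hd.not_reflTransGen hab (.single hba)

lemma IsDAG.ne_of_skel (hd : IsDAG d) {a b : V} (h : Skel d a b) : a ≠ b := by
  rintro rfl
  exact h.elim (fun e => hd.asymm e e) (fun e => hd.asymm e e)

lemma IsDAG.exists_sink (hd : IsDAG d) {B : Set V} (hfin : B.Finite) (hB : B.Nonempty) :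
    ∃ v ∈ B, ∀ w ∈ B, ¬ d v w := by
  let _ : Preorder V :=
    { le := ReflTransGen d
      le_refl := fun _ => .refl
      le_trans := fun _ _ _ => .trans }
  obtain ⟨v, hv⟩ := hfin.exists_maximal hB
  exact ⟨v, hv.prop, fun w hw e => hd.not_reflTransGen e (hv.le_of_ge hw (.single e))⟩

/-- The ancestral set `An(T)`: all vertices with a directed path, possibly of length zero, into
`T`. -/
def ancestors (d : V → V → Prop) (T : Set V) : Set V := {v | ∃ t ∈ T, ReflTransGen d v t}

variable {S T : Set V}

lemma subset_ancestors : T ⊆ ancestors d T := fun t ht => ⟨t, ht, .refl⟩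

lemma ancestors_mono (h : S ⊆ T) : ancestors d S ⊆ ancestors d T :=
  fun _ ⟨s, hs, p⟩ => ⟨s, h hs, p⟩

lemma mem_ancestors_of_edge {a b : V} (h : d a b) (hb : b ∈ ancestors d T) :
    a ∈ ancestors d T :=
  let ⟨t, ht, p⟩ := hb
  ⟨t, ht, .head h p⟩

/-- `A` is grounded in `T` if every vertex of `A` outside `T` has a child in `A`. For finite `A` in
a DAG this says that `A` contains a directed path from each of its vertices into `T`; unlike
`A ⊆ ancestors d T`, it only looks at edges inside `A`. -/
def Grounded (d : V → V → Prop) (A T : Set V) : Prop := ∀ v ∈ A, v ∉ T → ∃ w ∈ A, d v w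

lemma Grounded.union {A B : Set V} (hA : Grounded d A T) (hB : Grounded d B T) :
    Grounded d (A ∪ B) T := by
  rintro v (hv | hv) hvT
  · obtain ⟨w, hw, e⟩ := hA v hv hvT
    exact ⟨w, .inl hw, e⟩
  · obtain ⟨w, hw, e⟩ := hB v hv hvT
    exact ⟨w, .inr hw, e⟩

lemma exists_grounded_of_mem_ancestors {v : V} (hv : v ∈ ancestors d T) :
    ∃ A : Set V, A.Finite ∧ v ∈ A ∧ Grounded d A T := by
  obtain ⟨t, ht, p⟩ := hv
  induction p using ReflTransGen.head_induction_on with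
  | refl => exact ⟨{t}, Set.finite_singleton t, rfl, fun u hu hut => (hut (hu ▸ ht)).elim⟩
  | @head v w e _ ih =>
    obtain ⟨A, hfin, hw, hA⟩ := ih
    refine ⟨insert v A, hfin.insert v, .inl rfl, ?_⟩
    rintro u (rfl | hu) huT
    · exact ⟨w, .inr hw, e⟩
    · obtain ⟨w', hw', e'⟩ := hA u hu huT
      exact ⟨w', .inr hw', e'⟩

lemma exists_grounded_of_forall_mem_ancestors (l : List V) (hl : ∀ v ∈ l, v ∈ ancestors d T) :
    ∃ A : Set V, A.Finite ∧ (∀ v ∈ l, v ∈ A) ∧ Grounded d A T := by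
  induction l with
  | nil => exact ⟨∅, Set.finite_empty, by simp, fun v hv => hv.elim⟩
  | cons a l ih =>
    rw [List.forall_mem_cons] at hl
    obtain ⟨A, hAfin, haA, hA⟩ := exists_grounded_of_mem_ancestors hl.1
    obtain ⟨B, hBfin, hlB, hB⟩ := ih hl.2
    exact ⟨A ∪ B, hAfin.union hBfin,
      List.forall_mem_cons.2 ⟨.inl haA, fun v hv => .inr (hlB v hv)⟩, hA.union hB⟩

end Ancestors

section ActiveTrails

variable {V : Type*} {d : V → V → Prop} {Z : Set V}

/-- The triple `(a, b, c)` lets a trail pass through `b` given `Z`. -/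
def OpenAt (d : V → V → Prop) (Z : Set V) (a b c : V) : Prop :=
  (Collider d a b c → b ∈ ancestors d Z) ∧ (¬ Collider d a b c → b ∉ Z)

lemma openAt_of_mem_ancestors {a b c : V} (hb : b ∈ ancestors d Z) (hbZ : b ∉ Z) :
    OpenAt d Z a b c :=
  ⟨fun _ => hb, fun _ => hbZ⟩

lemma openAt_of_collider {a b c : V} (hb : b ∈ ancestors d Z) (h : Collider d a b c) :
    OpenAt d Z a b c :=
  ⟨fun _ => hb, fun h' => (h' h).elim⟩

lemma openAt_of_not_collider {a b c : V} (hb : b ∉ Z) (h : ¬ Collider d a b c) :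
    OpenAt d Z a b c :=
  ⟨fun h' => (h h').elim, fun _ => hb⟩

lemma OpenAt.collider {a b c : V} (h : OpenAt d Z a b c) (hb : b ∈ Z) : Collider d a b c := by
  by_contra hc
  exact h.2 hc hb

lemma not_blocked_iff {l : List V} :
    ¬ Blocked d Z l ↔ ∀ a b c, [a, b, c] <:+: l → OpenAt d Z a b c := by
  simp only [Blocked, OpenAt, ancestors, Set.mem_ofPred_eq]
  grind

lemma not_blocked_singleton (a : V) : ¬ Blocked d Z [a] := by
  rintro ⟨_, _, _, h, -⟩
  simpa using h.length_le

lemma not_blocked_cons_cons {a b : V} {l : List V} :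
    ¬ Blocked d Z (a :: b :: l) ↔
      (∀ c ∈ l.head?, OpenAt d Z a b c) ∧ ¬ Blocked d Z (b :: l) := by
  simp only [not_blocked_iff, List.infix_cons_iff (a := a), or_imp, forall_and]
  refine and_congr_left fun _ => ?_
  constructor
  · rintro h c hc
    obtain ⟨l, rfl⟩ := List.head?_eq_some_iff.1 hc
    exact h a b c ⟨l, rfl⟩
  · rintro h _ _ c ⟨l', hl'⟩
    obtain ⟨rfl, rfl, rfl⟩ : _ = a ∧ _ = b ∧ c :: l' = l := by simpa using hl'
    exact h c rfl

lemma isTrail_singleton {x y : V} : IsTrail d [x] x y ↔ x = y := by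
  refine ⟨fun h => Option.some.inj h.2.1, ?_⟩
  rintro rfl
  exact ⟨rfl, rfl, List.nodup_singleton x, .singleton x⟩

lemma isTrail_cons_cons {x y b : V} {l : List V} :
    IsTrail d (x :: b :: l) x y ↔ x ∉ b :: l ∧ Skel d x b ∧ IsTrail d (b :: l) b y := by
  have hchain : (x :: b :: l).IsChain (Skel d) ↔ Skel d x b ∧ (b :: l).IsChain (Skel d) :=
    List.isChain_cons_cons
  simp only [IsTrail, List.head?_cons, List.getLast?_cons_cons, List.nodup_cons (a := x), true_and]
  tauto

/-- `x :: l` is a trail from `x` to `y` that is active given `Z`, that is, not blocked by `Z`. -/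
def ActiveTrail (d : V → V → Prop) (Z : Set V) (x : V) (l : List V) (y : V) : Prop :=
  IsTrail d (x :: l) x y ∧ ¬ Blocked d Z (x :: l)

lemma activeTrail_nil {x y : V} : ActiveTrail d Z x [] y ↔ x = y := by
  simp [ActiveTrail, isTrail_singleton, not_blocked_singleton]

lemma activeTrail_cons {x y b : V} {l : List V} :
    ActiveTrail d Z x (b :: l) y ↔
      x ∉ b :: l ∧ Skel d x b ∧ (∀ c ∈ l.head?, OpenAt d Z x b c) ∧ ActiveTrail d Z b l y := by
  simp only [ActiveTrail, isTrail_cons_cons, not_blocked_cons_cons]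
  tauto

lemma ActiveTrail.head_skel {x y b : V} {l : List V} (h : ActiveTrail d Z x (b :: l) y) :
    Skel d x b :=
  (activeTrail_cons.1 h).2.1

lemma ActiveTrail.openAt {x y b c : V} {l : List V} (h : ActiveTrail d Z x (b :: c :: l) y) :
    OpenAt d Z x b c :=
  (activeTrail_cons.1 h).2.2.1 c rfl

lemma ActiveTrail.tail {x y b : V} {l : List V} (h : ActiveTrail d Z x (b :: l) y) :
    ActiveTrail d Z b l y :=
  (activeTrail_cons.1 h).2.2.2

lemma ActiveTrail.exists_suffix {x y b : V} {l : List V} (h : ActiveTrail d Z x l y)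
    (hb : b ∈ l) :
    ∃ a l', (∀ c ∈ l'.head?, OpenAt d Z a b c) ∧ ActiveTrail d Z b l' y := by
  induction l generalizing x with
  | nil => cases hb
  | cons w l ih =>
    obtain ⟨-, -, hopen, htail⟩ := activeTrail_cons.1 h
    rcases List.mem_cons.1 hb with rfl | hb
    · exact ⟨x, l, hopen, htail⟩
    · exact ih htail hb

/-- `x` and `y` are d-connected given `Z`, the negation of d-separation. -/
def DConn (d : V → V → Prop) (Z : Set V) (x y : V) : Prop := ∃ l, ActiveTrail d Z x l y

lemma dConn_iff_not_dSep {x y : V} : DConn d Z x y ↔ ¬ DSep d Z x y := by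
  simp only [DConn, DSep, ActiveTrail, not_forall, exists_prop]
  refine ⟨fun ⟨l, h⟩ => ⟨x :: l, h⟩, fun ⟨l, h⟩ => ?_⟩
  obtain ⟨r, rfl⟩ := List.head?_eq_some_iff.1 h.1.1
  exact ⟨r, h⟩

lemma DSep.symm {x y : V} (h : DSep d Z x y) : DSep d Z y x := by
  rintro l ⟨hhead, hlast, hnodup, hchain⟩
  obtain ⟨a, b, c, hinfix, hblock⟩ := h l.reverse
    ⟨by simpa, by simpa, by simpa, List.isChain_reverse.2 (hchain.imp fun _ _ => Or.symm)⟩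
  have hcomm : Collider d c b a ↔ Collider d a b c := and_comm
  exact ⟨c, b, a, by simpa using List.reverse_infix.2 hinfix, by rwa [hcomm]⟩

lemma DConn.symm {x y : V} (h : DConn d Z x y) : DConn d Z y x :=
  dConn_iff_not_dSep.2 fun hsep => dConn_iff_not_dSep.1 h hsep.symm

lemma DConn.refl (x : V) : DConn d Z x x := ⟨[], activeTrail_nil.2 rfl⟩

lemma dConn_of_skel {x y : V} (hne : x ≠ y) (h : Skel d x y) : DConn d Z x y :=
  ⟨[y], activeTrail_cons.2 ⟨by simpa using hne, h, by simp, activeTrail_nil.2 rfl⟩⟩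

lemma dConn_of_openAt {x b y : V} (hnodup : [x, b, y].Nodup) (hxb : Skel d x b)
    (hby : Skel d b y) (h : OpenAt d Z x b y) : DConn d Z x y := by
  simp only [List.nodup_cons (a := x), List.nodup_cons (a := b)] at hnodup
  exact ⟨[b, y], activeTrail_cons.2 ⟨hnodup.1, hxb, by simpa using h,
    activeTrail_cons.2 ⟨hnodup.2.1, hby, by simp, activeTrail_nil.2 rfl⟩⟩⟩

end ActiveTrails

section Moralization

variable {V : Type*} {d : V → V → Prop} {Z : Set V}

-- If the new vertex `c` already lies on the trail, the part of the trail after `c` does the job.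
lemma ActiveTrail.dConn_cons (hd : IsDAG d) {c v x : V} {l : List V} (h : ActiveTrail d Z v l x)
    (hs : Skel d c v) (hopen : ∀ u ∈ l.head?, OpenAt d Z c v u) : DConn d Z c x := by
  by_cases hc : c ∈ l
  · obtain ⟨-, l', -, h'⟩ := h.exists_suffix hc
    exact ⟨l', h'⟩
  · exact ⟨v :: l, activeTrail_cons.2 ⟨by simp [hd.ne_of_skel hs, hc], hs, hopen, h⟩⟩

lemma DConn.of_edge_to (hd : IsDAG d) {v c x : V} (h : DConn d Z v x) (hv : v ∉ Z)
    (hvc : d v c) : DConn d Z c x := by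
  obtain ⟨l, hl⟩ := h
  exact hl.dConn_cons hd (.inr hvc) fun u _ =>
    openAt_of_not_collider hv fun hcol => hd.asymm hcol.1 hvc

lemma DConn.of_reflTransGen (hd : IsDAG d) {v y x : V} (h : DConn d Z v x)
    (hv : v ∉ ancestors d Z) (hvy : ReflTransGen d v y) : DConn d Z y x := by
  induction hvy using ReflTransGen.head_induction_on with
  | refl => exact h
  | head e _ ih =>
    exact ih (h.of_edge_to hd (fun hZ => hv (subset_ancestors hZ)) e)
      (fun hw => hv (mem_ancestors_of_edge e hw))

lemma DConn.of_edge_from (hd : IsDAG d) {v c x : V} (h : DConn d Z v x) (hv : v ∉ Z)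
    (hvZ : v ∈ ancestors d Z) (hcv : d c v) : DConn d Z c x := by
  obtain ⟨l, hl⟩ := h
  exact hl.dConn_cons hd (.inl hcv) fun u _ => openAt_of_mem_ancestors hvZ hv

lemma DConn.of_collider (hd : IsDAG d) {z b c x : V} (h : DConn d Z z x) (hz : z ∉ Z)
    (hcol : Collider d z b c) (hb : b ∈ ancestors d Z) : DConn d Z c x := by
  obtain ⟨l, hl⟩ := h
  have hzb : z ≠ b := hd.ne_of_skel (.inl hcol.1)
  by_cases hbl : b ∈ l
  · obtain ⟨a, l', hopen, hl'⟩ := hl.exists_suffix hbl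
    refine hl'.dConn_cons hd (.inl hcol.2) fun u hu => ?_
    by_cases hbZ : b ∈ Z
    · exact openAt_of_collider hb ⟨hcol.2, ((hopen u hu).collider hbZ).2⟩
    · exact openAt_of_mem_ancestors hb hbZ
  · have hl' : ActiveTrail d Z b (z :: l) x :=
      activeTrail_cons.2 ⟨by simp [hzb.symm, hbl], .inr hcol.1, fun u _ =>
        openAt_of_not_collider hz fun h' => hd.asymm h'.1 hcol.1, hl⟩
    refine hl'.dConn_cons hd (.inl hcol.2) fun u hu => ?_
    obtain rfl : z = u := by simpa using hu
    exact openAt_of_collider hb ⟨hcol.2, hcol.1⟩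

-- A vertex `v` outside `An(Z)` has a directed path avoiding `Z` to `y`, which continues the trail
-- from `x`, or to `x`, in which case `c → v → ⋯ → x` is a new trail.
lemma DConn.of_edge_from_or (hd : IsDAG d) {x y v c : V} (h : DConn d Z v x)
    (hv : v ∈ ancestors d (insert x (insert y Z))) (hvZ : v ∉ ancestors d Z) (hcv : d c v)
    (hc : c ∉ Z) : DConn d Z y x ∨ DConn d Z c x := by
  obtain ⟨t, rfl | rfl | ht, p⟩ := hv
  · exact .inr (((DConn.refl c).of_edge_to hd hc hcv).of_reflTransGen hd hvZ p).symm
  · exact .inl (h.of_reflTransGen hd hvZ p)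
  · exact (hvZ ⟨t, ht, p⟩).elim

/-- Adjacency in the moral graph of the subgraph induced on `A`, with the vertices of `Z` deleted:
`a` and `c` are adjacent in the skeleton, or are the nonadjacent parents of a common child in
`A`. -/
def MoralAdj (d : V → V → Prop) (A Z : Set V) (a c : V) : Prop :=
  a ∈ A \ Z ∧ c ∈ A \ Z ∧ (Skel d a c ∨ ∃ b ∈ A, VStruct d a b c)

lemma MoralAdj.symm {A : Set V} {a c : V} (h : MoralAdj d A Z a c) : MoralAdj d A Z c a := by
  obtain ⟨ha, hc, hs | ⟨b, hbA, hab, hcb, hne, hns⟩⟩ := h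
  · exact ⟨hc, ha, .inl hs.symm⟩
  · exact ⟨hc, ha, .inr ⟨b, hbA, hcb, hab, hne.symm, fun hs => hns hs.symm⟩⟩

lemma DConn.of_moralAdj_or (hd : IsDAG d) {x y z c : V} (h : DConn d Z z x)
    (hm : MoralAdj d (ancestors d (insert x (insert y Z))) Z z c) :
    DConn d Z y x ∨ DConn d Z c x := by
  obtain ⟨⟨hzA, hz⟩, ⟨-, hc⟩, (hzc | hcz) | ⟨b, hbA, hzb, hcb, -, -⟩⟩ := hm
  · exact .inr (h.of_edge_to hd hz hzc)
  · by_cases hzZ : z ∈ ancestors d Z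
    · exact .inr (h.of_edge_from hd hz hzZ hcz)
    · exact h.of_edge_from_or hd hzA hzZ hcz hc
  · by_cases hbZ : b ∈ ancestors d Z
    · exact .inr (h.of_collider hd hz ⟨hzb, hcb⟩ hbZ)
    · exact (h.of_edge_to hd hz hzb).of_edge_from_or hd hbA hbZ hcb hc

theorem dConn_of_reflTransGen_moralAdj (hd : IsDAG d) {x y : V}
    (h : ReflTransGen (MoralAdj d (ancestors d (insert x (insert y Z))) Z) x y) :
    DConn d Z x y := by
  have reach : ∀ z, ReflTransGen (MoralAdj d (ancestors d (insert x (insert y Z))) Z) x z →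
      DConn d Z y x ∨ DConn d Z z x := by
    intro z hz
    induction hz with
    | refl => exact .inr (.refl x)
    | tail _ hm ih => exact ih.elim .inl fun hzx => hzx.of_moralAdj_or hd hm
  exact ((reach y h).elim id id).symm

lemma ActiveTrail.mem_ancestors_of_head_edge {v w y : V} {l : List V}
    (h : ActiveTrail d Z v (w :: l) y) (hvw : d v w) : w ∈ ancestors d (insert y Z) := by
  induction l generalizing v w with
  | nil => exact subset_ancestors (.inl (activeTrail_nil.1 h.tail))
  | cons c l ih =>
    rcases h.tail.head_skel with hwc | hcw
    · exact mem_ancestors_of_edge hwc (ih h.tail hwc)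
    · exact ancestors_mono (Set.subset_insert y Z) (h.openAt.1 ⟨hvw, hcw⟩)

lemma ActiveTrail.forall_mem_ancestors {T : Set V} {x y : V} {l : List V}
    (h : ActiveTrail d Z x l y) (hx : x ∈ ancestors d T) (hT : insert y Z ⊆ T) :
    ∀ v ∈ x :: l, v ∈ ancestors d T := by
  induction l generalizing x with
  | nil => simpa using hx
  | cons b l ih =>
    have hb : b ∈ ancestors d T := by
      rcases h.head_skel with hxb | hbx
      · exact ancestors_mono hT (h.mem_ancestors_of_head_edge hxb)
      · exact mem_ancestors_of_edge hbx hx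
    exact List.forall_mem_cons.2 ⟨hx, ih h.tail hb⟩

theorem ActiveTrail.reflTransGen_moralAdj (hd : IsDAG d) {A : Set V} {x y : V} {l : List V}
    (h : ActiveTrail d Z x l y) (hA : ∀ v ∈ x :: l, v ∈ A) (hx : x ∉ Z) (hy : y ∉ Z) :
    ReflTransGen (MoralAdj d A Z) x y := by
  match l with
  | [] =>
    rw [activeTrail_nil.1 h]
  | b :: l =>
    by_cases hb : b ∈ Z
    · match l with
      | [] => exact (hy (activeTrail_nil.1 h.tail ▸ hb)).elim
      | c :: l =>
        have hcol : Collider d x b c := h.openAt.collider hb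
        have hxc : x ≠ c := fun hxc => (activeTrail_cons.1 h).1 (by simp [hxc])
        have hc : c ∉ Z := by
          match l with
          | [] => exact activeTrail_nil.1 h.tail.tail ▸ hy
          | _ :: _ => exact fun hcZ => hd.asymm hcol.2 (h.tail.openAt.collider hcZ).1
        have hadj : Skel d x c ∨ ∃ b ∈ A, VStruct d x b c :=
          or_iff_not_imp_left.2 fun hs => ⟨b, hA b (by simp), hcol.1, hcol.2, hxc, hs⟩
        exact .head ⟨⟨hA x (by simp), hx⟩, ⟨hA c (by simp), hc⟩, hadj⟩
          (h.tail.tail.reflTransGen_moralAdj hd (fun v hv => hA v (by simp [hv])) hc hy)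
    · exact .head ⟨⟨hA x (by simp), hx⟩, ⟨hA b (by simp), hb⟩, .inl h.head_skel⟩
        (h.tail.reflTransGen_moralAdj hd (fun v hv => hA v (.tail x hv)) hb hy)

theorem DConn.exists_grounded (hd : IsDAG d) {x y : V} (h : DConn d Z x y) (hx : x ∉ Z)
    (hy : y ∉ Z) :
    ∃ A : Set V, A.Finite ∧ Grounded d A (insert x (insert y Z)) ∧
      ReflTransGen (MoralAdj d A Z) x y := by
  obtain ⟨l, hl⟩ := h
  obtain ⟨A, hfin, hlA, hA⟩ := exists_grounded_of_forall_mem_ancestors (x :: l)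
    (hl.forall_mem_ancestors (subset_ancestors (.inl rfl)) (Set.subset_insert x (insert y Z)))
  exact ⟨A, hfin, hA, hl.reflTransGen_moralAdj hd hlA hx hy⟩

end Moralization

lemma reflTransGen_bypass {α : Type*} {r r' : α → α → Prop} {v x y : α} (h : ReflTransGen r x y)
    (hx : x ≠ v) (hy : y ≠ v) (hdirect : ∀ a c, a ≠ v → c ≠ v → r a c → r' a c)
    (hthrough : ∀ a c, a ≠ v → c ≠ v → r a v → r v c → ReflTransGen r' a c) :
    ReflTransGen r' x y := by
  have reach : ∀ z, ReflTransGen r x z →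
      (z ≠ v → ReflTransGen r' x z) ∧ (z = v → ∃ a ≠ v, r a v ∧ ReflTransGen r' x a) := by
    intro z hz
    induction hz with
    | refl => exact ⟨fun _ => .refl, fun h => (hx h).elim⟩
    | @tail z c _ hzc ih =>
      by_cases hzv : z = v
      · subst hzv
        obtain ⟨a, haz, hr, ha⟩ := ih.2 rfl
        exact ⟨fun hcz => ha.trans (hthrough a c haz hcz hr hzc), fun _ => ⟨a, haz, hr, ha⟩⟩
      · refine ⟨fun hcv => (ih.1 hzv).tail (hdirect z c hzv hcv hzc), ?_⟩
        rintro rfl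
        exact ⟨z, hzv, hzc, ih.1 hzv⟩
  exact (reach y h).1 hy

section Elimination

variable {V : Type*} {d d₁ d₂ : V → V → Prop} {A T Z : Set V} {v w x y : V}

lemma Grounded.sdiff_singleton (hA : Grounded d A T) (hwA : w ∈ A) (hwv : w ≠ v)
    (hdom : ∀ u ∈ A, d u v → d u w) : Grounded d (A \ {v}) T := by
  rintro u ⟨huA, -⟩ huT
  obtain ⟨t, htA, hut⟩ := hA u huA huT
  by_cases htv : t = v
  · subst htv
    exact ⟨w, ⟨hwA, hwv⟩, hdom u huA hut⟩
  · exact ⟨t, ⟨htA, htv⟩, hut⟩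

lemma MoralAdj.sdiff_singleton (hwA : w ∈ A) (hwv : w ≠ v) (hdom : ∀ u ∈ A, d u v → d u w)
    {a c : V} (h : MoralAdj d A Z a c) (ha : a ≠ v) (hc : c ≠ v) :
    MoralAdj d (A \ {v}) Z a c := by
  obtain ⟨⟨haA, haZ⟩, ⟨hcA, hcZ⟩, hadj⟩ := h
  refine ⟨⟨⟨haA, ha⟩, haZ⟩, ⟨⟨hcA, hc⟩, hcZ⟩, hadj.imp_right ?_⟩
  rintro ⟨b, hbA, hb⟩
  by_cases hbv : b = v
  · subst hbv
    exact ⟨w, ⟨hwA, hwv⟩, hdom a haA hb.1, hdom c hcA hb.2.1, hb.2.2⟩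
  · exact ⟨b, ⟨hbA, hbv⟩, hb⟩

lemma edge_trans_of_sink (h₁ : IsDAG d₁) (hs : ∀ a b, Skel d₁ a b ↔ Skel d₂ a b)
    (hv : ∀ a b c, VStruct d₁ a b c ↔ VStruct d₂ a b c) (hsink : ∀ u ∈ A, ¬ d₂ v u)
    (hwA : w ∈ A) (hvw : d₁ v w) {u : V} (huA : u ∈ A) (huv : d₁ u v) : d₁ u w := by
  have huw : u ≠ w := by
    rintro rfl
    exact h₁.asymm huv hvw
  have huv₂ : d₂ u v := ((hs u v).1 (.inl huv)).resolve_right (hsink u huA)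
  have hwv₂ : d₂ w v := ((hs w v).1 (.inr hvw)).resolve_right (hsink w hwA)
  have hadj : Skel d₁ u w := by
    by_contra hn
    have hvs := (hv u v w).2 ⟨huv₂, hwv₂, huw, fun h => hn ((hs u w).2 h)⟩
    exact h₁.asymm hvw hvs.2.1
  exact hadj.resolve_right fun hwu => h₁.not_reflTransGen huv (.head hvw (.single hwu))

lemma MoralAdj.edge_of_sink (hs : ∀ a b, Skel d₁ a b ↔ Skel d₂ a b)
    (hv : ∀ a b c, VStruct d₁ a b c ↔ VStruct d₂ a b c) (hsink : ∀ u ∈ A, ¬ d₂ v u) {a : V}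
    (h : MoralAdj d₁ A Z a v) : d₂ a v := by
  obtain ⟨⟨haA, -⟩, -, hadj | ⟨b, hbA, hb⟩⟩ := h
  · exact ((hs a v).1 hadj).resolve_right (hsink a haA)
  · exact (hsink b hbA ((hv a b v).1 hb).2.1).elim

lemma MoralAdj.trans_of_sink (hs : ∀ a b, Skel d₁ a b ↔ Skel d₂ a b)
    (hv : ∀ a b c, VStruct d₁ a b c ↔ VStruct d₂ a b c) (hsink : ∀ u ∈ A, ¬ d₂ v u) {a c : V}
    (hav : MoralAdj d₁ A Z a v) (hvc : MoralAdj d₁ A Z v c) (hac : a ≠ c) :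
    MoralAdj d₁ A Z a c := by
  refine ⟨hav.1, hvc.2.1, or_iff_not_imp_left.2 fun hn => ⟨v, hav.2.1.1, (hv a v c).2 ?_⟩⟩
  exact ⟨hav.edge_of_sink hs hv hsink, hvc.symm.edge_of_sink hs hv hsink, hac,
    fun h => hn ((hs a c).2 h)⟩

lemma Grounded.remove_sink (h₁ : IsDAG d₁) (hs : ∀ a b, Skel d₁ a b ↔ Skel d₂ a b)
    (hv : ∀ a b c, VStruct d₁ a b c ↔ VStruct d₂ a b c) (hA : Grounded d₁ A T) (hxT : x ∈ T)
    (hyT : y ∈ T) (hvA : v ∈ A) (hvT : v ∉ T) (hsink : ∀ u ∈ A, ¬ d₂ v u)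
    (hr : ReflTransGen (MoralAdj d₁ A Z) x y) :
    Grounded d₁ (A \ {v}) T ∧ ReflTransGen (MoralAdj d₁ (A \ {v}) Z) x y := by
  obtain ⟨w, hwA, hvw⟩ := hA v hvA hvT
  have hwv : w ≠ v := (h₁.ne_of_skel (.inl hvw)).symm
  have hdom : ∀ u ∈ A, d₁ u v → d₁ u w := fun u => edge_trans_of_sink h₁ hs hv hsink hwA hvw
  refine ⟨hA.sdiff_singleton hwA hwv hdom, reflTransGen_bypass hr
    (ne_of_mem_of_not_mem hxT hvT) (ne_of_mem_of_not_mem hyT hvT)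
    (fun a c ha hc h => h.sdiff_singleton hwA hwv hdom ha hc) fun a c ha hc hav hvc => ?_⟩
  by_cases hac : a = c
  · rw [hac]
  · exact .single ((hav.trans_of_sink hs hv hsink hvc hac).sdiff_singleton hwA hwv hdom ha hc)

theorem Grounded.exists_subset_ancestors (h₁ : IsDAG d₁) (h₂ : IsDAG d₂)
    (hs : ∀ a b, Skel d₁ a b ↔ Skel d₂ a b)
    (hv : ∀ a b c, VStruct d₁ a b c ↔ VStruct d₂ a b c) (hA : Grounded d₁ A T)
    (hfin : A.Finite) (hxT : x ∈ T) (hyT : y ∈ T) (hr : ReflTransGen (MoralAdj d₁ A Z) x y) :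
    ∃ B ⊆ ancestors d₂ T, ReflTransGen (MoralAdj d₁ B Z) x y := by
  let P (B : Set V) : Prop :=
    B.Finite ∧ Grounded d₁ B T ∧ ReflTransGen (MoralAdj d₁ B Z) x y
  obtain ⟨B, ⟨hfin, hB, hr⟩, hmin⟩ :=
    exists_minimalFor_of_wellFoundedLT P Set.ncard ⟨A, hfin, hA, hr⟩
  refine ⟨B, ?_, hr⟩
  by_contra hBT
  obtain ⟨v, ⟨hvB, hvn⟩, hsink_sdiff⟩ := h₂.exists_sink (hfin.sdiff (t := ancestors d₂ T))
    (Set.sdiff_nonempty.2 hBT)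
  have hsink : ∀ u ∈ B, ¬ d₂ v u := fun u hu e =>
    hsink_sdiff u ⟨hu, fun hun => hvn (mem_ancestors_of_edge e hun)⟩ e
  obtain ⟨hB', hr'⟩ := hB.remove_sink h₁ hs hv hxT hyT hvB
    (fun hvT => hvn (subset_ancestors hvT)) hsink hr
  have hlt : (B \ {v}).ncard < B.ncard := Set.ncard_sdiff_singleton_lt_of_mem hvB hfin
  exact hlt.not_ge (hmin ⟨hfin.sdiff, hB', hr'⟩ hlt.le)

lemma MoralAdj.of_skel_vStruct (hs : ∀ a b, Skel d₁ a b ↔ Skel d₂ a b)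
    (hv : ∀ a b c, VStruct d₁ a b c ↔ VStruct d₂ a b c) {B : Set V} (hAB : A ⊆ B) {a c : V}
    (h : MoralAdj d₁ A Z a c) : MoralAdj d₂ B Z a c := by
  obtain ⟨ha, hc, hadj⟩ := h
  exact ⟨⟨hAB ha.1, ha.2⟩, ⟨hAB hc.1, hc.2⟩, hadj.imp (hs a c).1
    fun ⟨b, hbA, hb⟩ => ⟨b, hAB hbA, (hv a b c).1 hb⟩⟩

theorem DConn.of_skel_vStruct (h₁ : IsDAG d₁) (h₂ : IsDAG d₂)
    (hs : ∀ a b, Skel d₁ a b ↔ Skel d₂ a b)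
    (hv : ∀ a b c, VStruct d₁ a b c ↔ VStruct d₂ a b c) (hx : x ∉ Z) (hy : y ∉ Z)
    (h : DConn d₁ Z x y) : DConn d₂ Z x y := by
  obtain ⟨A, hfin, hA, hr⟩ := h.exists_grounded h₁ hx hy
  obtain ⟨B, hB, hr⟩ := hA.exists_subset_ancestors h₁ h₂ hs hv hfin (.inl rfl) (.inr (.inl rfl)) hr
  exact dConn_of_reflTransGen_moralAdj h₂
    (ReflTransGen.mono (fun _ _ => .of_skel_vStruct hs hv hB) _ _ hr)

end Elimination

section SeparatingSets

variable {V : Type*} {d d₁ d₂ : V → V → Prop} {x y : V}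

lemma dSep_parents (hd : IsDAG d) (hs : ¬ Skel d x y) (hyx : ¬ ReflTransGen d y x) :
    DSep d {p | d p y} x y := by
  refine DSep.symm (not_not.1 fun h => ?_)
  obtain ⟨_ | ⟨p, l⟩, hl⟩ := dConn_iff_not_dSep.2 h
  · exact hyx (activeTrail_nil.1 hl ▸ .refl)
  rcases hl.head_skel with hyp | hpy
  · obtain ⟨t, rfl | hty, hpt⟩ := hl.mem_ancestors_of_head_edge hyp
    · exact hyx (.head hyp hpt)
    · exact hd.not_reflTransGen hyp (hpt.tail hty)
  · match l with
    | [] => exact hs (.inl (activeTrail_nil.1 hl.tail ▸ hpy))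
    | c :: l => exact hd.asymm hpy (hl.openAt.collider hpy).1

theorem exists_dSep (hd : IsDAG d) (hne : x ≠ y) (hs : ¬ Skel d x y) :
    ∃ Z : Set V, x ∉ Z ∧ y ∉ Z ∧ DSep d Z x y := by
  have hirrefl : ∀ a, ¬ d a a := fun a e => hd.asymm e e
  by_cases hyx : ReflTransGen d y x
  · have hxy : ¬ ReflTransGen d x y := fun hxy =>
      hxy.cases_head.elim hne fun ⟨_, e, p⟩ => hd.not_reflTransGen e (p.trans hyx)
    exact ⟨{p | d p x}, hirrefl x, fun e => hs (.inr e),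
      (dSep_parents hd (fun h => hs h.symm) hxy).symm⟩
  · exact ⟨{p | d p y}, fun e => hs (.inl e), hirrefl y, dSep_parents hd hs hyx⟩

lemma Skel.of_dSep (h₁ : IsDAG d₁) (h₂ : IsDAG d₂)
    (h : ∀ (Z : Set V) (x y : V), x ≠ y → x ∉ Z → y ∉ Z → DSep d₂ Z x y → DSep d₁ Z x y)
    (hs : Skel d₁ x y) : Skel d₂ x y := by
  by_contra hn
  have hne := h₁.ne_of_skel hs
  obtain ⟨Z, hx, hy, hsep⟩ := exists_dSep h₂ hne hn
  exact dConn_iff_not_dSep.1 (dConn_of_skel hne hs) (h Z x y hne hx hy hsep)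

lemma VStruct.of_dSep (h₁ : IsDAG d₁) (hs : ∀ a b, Skel d₁ a b ↔ Skel d₂ a b)
    (h : ∀ (Z : Set V) (x y : V), x ≠ y → x ∉ Z → y ∉ Z → DSep d₁ Z x y → DSep d₂ Z x y)
    {a b c : V} (hv : VStruct d₁ a b c) : VStruct d₂ a b c := by
  obtain ⟨hab, hcb, hac, hn⟩ := hv
  have hskel_ab : Skel d₁ a b := .inl hab
  have hskel_bc : Skel d₁ b c := .inr hcb
  have hnodup : [a, b, c].Nodup := by simp [h₁.ne_of_skel hskel_ab, h₁.ne_of_skel hskel_bc, hac]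
  obtain ⟨Z, ha, hc, hsep⟩ := exists_dSep h₁ hac hn
  have hb : b ∉ Z := fun hb => dConn_iff_not_dSep.1 (dConn_of_openAt hnodup hskel_ab hskel_bc
    (openAt_of_collider (subset_ancestors hb) ⟨hab, hcb⟩)) hsep
  have hcol : Collider d₂ a b c := by
    by_contra hcol
    exact dConn_iff_not_dSep.1 (dConn_of_openAt hnodup ((hs a b).1 hskel_ab)
      ((hs b c).1 hskel_bc) (openAt_of_not_collider hb hcol)) (h Z a c hac ha hc hsep)
  exact ⟨hcol.1, hcol.2, hac, fun h => hn ((hs a c).2 h)⟩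

end SeparatingSets

theorem stmt11_general {V : Type*} (d₁ d₂ : V → V → Prop)
    (h₁ : ∀ x, ¬ Relation.TransGen d₁ x x)
    (h₂ : ∀ x, ¬ Relation.TransGen d₂ x x) :
    ((∀ a b, Skel d₁ a b ↔ Skel d₂ a b) ∧
       (∀ a b c, VStruct d₁ a b c ↔ VStruct d₂ a b c)) ↔
    (∀ (Z : Set V) (x y : V), x ≠ y → x ∉ Z → y ∉ Z →
       (DSep d₁ Z x y ↔ DSep d₂ Z x y)) := by
  constructor
  · rintro ⟨hs, hv⟩ Z x y - hx hy
    rw [← not_iff_not, ← dConn_iff_not_dSep, ← dConn_iff_not_dSep]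
    exact ⟨.of_skel_vStruct h₁ h₂ hs hv hx hy, .of_skel_vStruct h₂ h₁
      (fun a b => (hs a b).symm) (fun a b c => (hv a b c).symm) hx hy⟩
  · intro h
    have h12 := fun Z x y hne hx hy => (h Z x y hne hx hy).1
    have h21 := fun Z x y hne hx hy => (h Z x y hne hx hy).2
    have hs : ∀ a b, Skel d₁ a b ↔ Skel d₂ a b :=
      fun a b => ⟨.of_dSep h₁ h₂ h21, .of_dSep h₂ h₁ h12⟩
    exact ⟨hs, fun a b c => ⟨.of_dSep h₁ hs h12,
      .of_dSep h₂ (fun a b => (hs a b).symm) h21⟩⟩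

/-- Verma–Pearl: two DAGs on the same finite vertex set are Markov equivalent
(induce the same d-separation relations) if and only if they have the same
skeleton and the same v-structures. -/
theorem stmt11 {V : Type*} [Fintype V] (d₁ d₂ : V → V → Prop)
    (h₁ : ∀ x, ¬ Relation.TransGen d₁ x x)
    (h₂ : ∀ x, ¬ Relation.TransGen d₂ x x) :
    ((∀ a b, Skel d₁ a b ↔ Skel d₂ a b) ∧
       (∀ a b c, VStruct d₁ a b c ↔ VStruct d₂ a b c)) ↔
    (∀ (Z : Set V) (x y : V), x ≠ y → x ∉ Z → y ∉ Z →
       (DSep d₁ Z x y ↔ DSep d₂ Z x y)) :=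
  stmt11_general d₁ d₂ h₁ h₂
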